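/- Let ρ and σ be quantum states (positive semidefinite with trace 1) on a finite-dimensional Hilbert space such that μσ ≤ ρ ≤ λσ for constants 0 < μ ≤ λ < ∞. Then the quantum relative entropy satisfies D(ρ‖σ) = ∫_μ^λ (1/s) tr⁺[σ s − ρ] ds + ln λ + 1 − λ. -/

import Mathlib

open Matrix
open scoped ComplexOrder

/-- Trace of the positive part, via the variational formula. -/
noncomputable def trPos {n : Type*} [Fintype n] [DecidableEq n] (M : Matrix n n ℂ) : ℝ :=
  sSup {x : ℝ | ∃ P : Matrix n n ℂ, P.PosSemidef ∧ ((1 : Matrix n n ℂ) - P).PosSemidef ∧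
    x = (Matrix.trace (P * M)).re}

/-- Matrix logarithm via the spectral decomposition (functional calculus with `Real.log`,
taken on the support). -/
noncomputable def matLog {n : Type*} [Fintype n] [DecidableEq n] (A : Matrix n n ℂ) :
    Matrix n n ℂ :=
  if hA : A.IsHermitian then
    (hA.eigenvectorUnitary : Matrix n n ℂ) *
      Matrix.diagonal (fun i => (Real.log (hA.eigenvalues i) : ℂ)) *
      (star hA.eigenvectorUnitary : Matrix n n ℂ)
  else 0


namespace RelEntAux

/-- Real diagonal matrix. -/
noncomputable abbrev Dg {n : Type*} [DecidableEq n] (m : n → ℝ) : Matrix n n ℂ :=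
  Matrix.diagonal (fun i => (m i : ℂ))

set_option linter.unusedSectionVars false

variable {n : Type*} [Fintype n] [DecidableEq n]

lemma spec (A : Matrix n n ℂ) (hA : A.IsHermitian) :
    A = (hA.eigenvectorUnitary : Matrix n n ℂ) * Dg hA.eigenvalues *
      (hA.eigenvectorUnitary : Matrix n n ℂ)ᴴ := by
  have h := hA.spectral_theorem
  rw [Unitary.conjStarAlgAut_apply] at h
  exact h

lemma spec_ex (A : Matrix n n ℂ) (hA : A.IsHermitian) :
    ∃ (U : Matrix n n ℂ) (m : n → ℝ), U * Uᴴ = 1 ∧ Uᴴ * U = 1 ∧ A = U * Dg m * Uᴴ := by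
  refine ⟨hA.eigenvectorUnitary, hA.eigenvalues, ?_, ?_, spec A hA⟩
  · exact Unitary.coe_mul_star_self hA.eigenvectorUnitary
  · exact Unitary.coe_star_mul_self hA.eigenvectorUnitary

lemma trace_conj (P U : Matrix n n ℂ) (m : n → ℝ) :
    (Matrix.trace (P * (U * Dg m * Uᴴ))).re = ∑ i, ((Uᴴ * P * U) i i).re * m i := by
  have : Matrix.trace (P * (U * Dg m * Uᴴ)) = Matrix.trace ((Uᴴ * P * U) * Dg m) := by
    rw [Matrix.trace_mul_comm, Matrix.trace_mul_comm (Uᴴ * P * U)]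
    simp only [Matrix.mul_assoc]
    rw [Matrix.trace_mul_comm]
    simp only [Matrix.mul_assoc]
  rw [this]
  simp [Matrix.trace, Matrix.mul_diagonal]

lemma trPos_isGreatest (U : Matrix n n ℂ) (m : n → ℝ) (h1 : U * Uᴴ = 1) (h2 : Uᴴ * U = 1) :
    IsGreatest {x : ℝ | ∃ P : Matrix n n ℂ, P.PosSemidef ∧ ((1 : Matrix n n ℂ) - P).PosSemidef ∧
    x = (Matrix.trace (P * (U * Dg m * Uᴴ))).re} (∑ i, max (m i) 0) := by
  constructor
  · refine ⟨U * Dg (fun i => if 0 < m i then 1 else 0) * Uᴴ, ?_, ?_, ?_⟩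
    · apply Matrix.PosSemidef.mul_mul_conjTranspose_same
      rw [Matrix.posSemidef_diagonal_iff]
      intro i; dsimp only; split_ifs <;> simp
    · have : (1 : Matrix n n ℂ) - U * Dg (fun i => if 0 < m i then 1 else 0) * Uᴴ =
        U * Dg (fun i => if 0 < m i then 0 else 1) * Uᴴ := by
        rw [sub_eq_iff_eq_add, ← Matrix.add_mul, ← Matrix.mul_add, Matrix.diagonal_add]
        have : (fun i => (((if 0 < m i then 0 else 1 : ℝ) : ℂ) +
          ((if 0 < m i then 1 else 0 : ℝ) : ℂ))) = fun _ => 1 := by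
          funext i; split_ifs <;> simp
        rw [this, Matrix.diagonal_one, Matrix.mul_one, h1]
      rw [this]
      apply Matrix.PosSemidef.mul_mul_conjTranspose_same
      rw [Matrix.posSemidef_diagonal_iff]
      intro i; dsimp only; split_ifs <;> simp
    · rw [trace_conj]
      apply Finset.sum_congr rfl
      intro i _
      have : Uᴴ * (U * Dg (fun i => if 0 < m i then 1 else 0) * Uᴴ) * U =
          Dg (fun i => if 0 < m i then 1 else 0) := by
        calc _ = (Uᴴ * U) * Dg (fun i => if 0 < m i then 1 else 0) * (Uᴴ * U) := by
              simp only [Matrix.mul_assoc]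
          _ = _ := by rw [h2]; simp
      rw [this]
      by_cases h : 0 < m i
      · simp [Matrix.diagonal_apply_eq, h, h.le]
      · simp [Matrix.diagonal_apply_eq, h, not_lt.mp h]
  · rintro x ⟨P, hP, hP1, rfl⟩
    rw [trace_conj]
    apply Finset.sum_le_sum
    intro i _
    have ha : 0 ≤ ((Uᴴ * P * U) i i).re :=
      (Complex.le_def.1 (hP.conjTranspose_mul_mul_same U).diag_nonneg).1
    have hb : ((Uᴴ * P * U) i i).re ≤ 1 := by
      have h := (Complex.le_def.1 ((hP1.conjTranspose_mul_mul_same U).diag_nonneg (i := i))).1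
      rw [Matrix.mul_sub, Matrix.sub_mul, Matrix.mul_one, h2] at h
      simpa using h
    rcases le_total 0 (m i) with h | h
    · rw [max_eq_left h]; nlinarith
    · rw [max_eq_right h]; nlinarith

lemma trPos_eq (U : Matrix n n ℂ) (m : n → ℝ) (h1 : U * Uᴴ = 1) (h2 : Uᴴ * U = 1) :
    trPos (U * Dg m * Uᴴ) = ∑ i, max (m i) 0 :=
  (trPos_isGreatest U m h1 h2).csSup_eq

lemma trace_mul_nonneg (P A : Matrix n n ℂ) (hP : P.PosSemidef) (hA : A.PosSemidef) :
    0 ≤ (Matrix.trace (P * A)).re := by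
  have h := trace_conj P hA.1.eigenvectorUnitary hA.1.eigenvalues
  rw [← spec A hA.1] at h
  rw [h]
  apply Finset.sum_nonneg
  intro i _
  exact mul_nonneg (Complex.le_def.1 (hP.conjTranspose_mul_mul_same _).diag_nonneg).1
    (hA.eigenvalues_nonneg i)

lemma trPos_mono (A B : Matrix n n ℂ) (hB : B.IsHermitian)
    (h : (B - A).PosSemidef) : trPos A ≤ trPos B := by
  obtain ⟨U, m, h1, h2, rfl⟩ := spec_ex B hB
  rw [trPos_eq U m h1 h2]
  apply csSup_le
  · exact ⟨_, 0, Matrix.PosSemidef.zero, by simpa using Matrix.PosSemidef.one, rfl⟩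
  rintro x ⟨P, hP, hP1, rfl⟩
  refine le_trans ?_ ((trPos_isGreatest U m h1 h2).2 ⟨P, hP, hP1, rfl⟩)
  have := trace_mul_nonneg P _ hP h
  rw [Matrix.mul_sub, Matrix.trace_sub, Complex.sub_re] at this
  linarith

lemma quad_diag (m : n → ℝ) (x : n → ℂ) :
    star x ⬝ᵥ (Dg m *ᵥ x) = ((∑ i, m i * Complex.normSq (x i) : ℝ) : ℂ) := by
  simp only [dotProduct, Matrix.mulVec_diagonal, Complex.ofReal_sum, Complex.ofReal_mul,
    Complex.normSq_eq_conj_mul_self, Pi.star_apply]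
  apply Finset.sum_congr rfl
  intro i _
  simp; ring

lemma inertia_le (B : Matrix n n ℂ) (m k : n → ℝ) (h : Dg m = B * Dg k * Bᴴ) :
    Fintype.card {i // 0 < m i} ≤ Fintype.card {i // 0 < k i} := by
  let E : ({i // 0 < m i} → ℂ) →ₗ[ℂ] (n → ℂ) := Function.ExtendByZero.linearMap ℂ Subtype.val
  let f : ({i // 0 < m i} → ℂ) →ₗ[ℂ] ({i // 0 < k i} → ℂ) :=
    (LinearMap.funLeft ℂ ℂ (Subtype.val : {i // 0 < k i} → n)) ∘ₗ (Matrix.mulVecLin Bᴴ) ∘ₗ E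
  have hf : Function.Injective f := by
    rw [← LinearMap.ker_eq_bot, LinearMap.ker_eq_bot']
    intro x hx
    have hq : (∑ i, m i * Complex.normSq (E x i)) =
        ∑ i, k i * Complex.normSq ((Bᴴ *ᵥ E x) i) := by
      have h1 := quad_diag m (E x)
      have h2 := quad_diag k (Bᴴ *ᵥ E x)
      rw [h, Matrix.mul_assoc, ← Matrix.mulVec_mulVec, Matrix.dotProduct_mulVec,
        ← Matrix.mulVec_mulVec] at h1
      rw [Matrix.star_mulVec, Matrix.conjTranspose_conjTranspose] at h2
      rw [h2] at h1
      exact_mod_cast h1.symm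
    have hr : ∑ i, k i * Complex.normSq ((Bᴴ *ᵥ E x) i) ≤ 0 := by
      apply Finset.sum_nonpos
      intro i _
      by_cases hi : 0 < k i
      · have := congrFun hx ⟨i, hi⟩
        have h3 : (Bᴴ *ᵥ E x) i = 0 := this
        rw [h3]; simp
      · exact mul_nonpos_of_nonpos_of_nonneg (not_lt.mp hi) (Complex.normSq_nonneg _)
    have hE : ∀ i : {i // 0 < m i}, E x i = x i := fun i =>
      Subtype.val_injective.extend_apply x (0 : n → ℂ) i
    have hE0 : ∀ i, ¬ 0 < m i → E x i = 0 := fun i hi => by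
      have : ¬ ∃ a : {i // 0 < m i}, a.1 = i := by rintro ⟨a, rfl⟩; exact hi a.2
      exact Function.extend_apply' x (0 : n → ℂ) i this
    have hnn : ∀ i ∈ Finset.univ, 0 ≤ m i * Complex.normSq (E x i) := by
      intro i _
      by_cases hi : 0 < m i
      · exact mul_nonneg hi.le (Complex.normSq_nonneg _)
      · rw [hE0 i hi]; simp
    have hz := (Finset.sum_eq_zero_iff_of_nonneg hnn).1
      (le_antisymm (hq.trans_le hr) (Finset.sum_nonneg hnn))
    funext i
    have := hz i.1 (Finset.mem_univ _)
    rcases mul_eq_zero.1 this with h0 | h0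
    · exact absurd h0 i.2.ne'
    · rw [hE] at h0; simpa using h0
  simpa using LinearMap.finrank_le_finrank_of_injective hf

lemma inertia (B C : Matrix n n ℂ) (m k : n → ℝ) (hBC : C * B = 1)
    (h : Dg m = B * Dg k * Bᴴ) :
    Fintype.card {i // 0 < m i} = Fintype.card {i // 0 < k i} ∧
    Fintype.card {i // m i < 0} = Fintype.card {i // k i < 0} := by
  have h' : Dg k = C * Dg m * Cᴴ := by
    have e : Bᴴ * Cᴴ = 1 := by rw [← Matrix.conjTranspose_mul, hBC, Matrix.conjTranspose_one]
    calc Dg k = (C * B) * Dg k * (Bᴴ * Cᴴ) := by rw [hBC, e]; simp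
      _ = _ := by rw [h]; simp only [Matrix.mul_assoc]
  have hneg : ∀ a : n → ℝ, Dg (fun i => - a i) = - Dg a := by
    intro a; simp [Matrix.diagonal_neg]
  have hn : Dg (fun i => - m i) = B * Dg (fun i => - k i) * Bᴴ := by
    rw [hneg, hneg, h, Matrix.mul_neg, Matrix.neg_mul]
  have hn' : Dg (fun i => - k i) = C * Dg (fun i => - m i) * Cᴴ := by
    rw [hneg, hneg, h', Matrix.mul_neg, Matrix.neg_mul]
  refine ⟨le_antisymm (inertia_le _ _ _ h) (inertia_le _ _ _ h'), ?_⟩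
  have := le_antisymm (inertia_le _ _ _ hn) (inertia_le _ _ _ hn')
  simpa using this

lemma Dg_mul (a b : n → ℝ) : Dg a * Dg b = Dg (fun i => a i * b i) := by
  simp [Matrix.diagonal_mul_diagonal]

lemma Dg_one : Dg (fun _ : n => (1 : ℝ)) = 1 := by
  rw [← Matrix.diagonal_one]; simp [Dg]

lemma Dg_star (a : n → ℝ) : (Dg a)ᴴ = Dg a := by
  rw [Matrix.diagonal_conjTranspose]
  congr 1
  funext i
  simp

lemma Dg_sub (s : ℝ) (a : n → ℝ) : s • (1 : Matrix n n ℂ) - Dg a = Dg (fun i => s - a i) := by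
  ext i j
  by_cases h : i = j
  · subst h; simp
  · simp [h]

lemma shift (W : Matrix n n ℂ) (m : n → ℝ) (c : ℝ) (h1 : W * Wᴴ = 1) :
    W * Dg m * Wᴴ + c • (1 : Matrix n n ℂ) = W * Dg (fun i => m i + c) * Wᴴ := by
  have : Dg (fun i => m i + c) = Dg m + c • (1 : Matrix n n ℂ) := by
    ext i j
    by_cases h : i = j
    · subst h; simp
    · simp [h]
  rw [this, Matrix.mul_add, Matrix.add_mul, Matrix.mul_smul, Matrix.smul_mul, Matrix.mul_one, h1]

lemma pencil (ρ U : Matrix n n ℂ) (a : n → ℝ) (hρ : ρ.IsHermitian) (h1 : U * Uᴴ = 1)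
    (h2 : Uᴴ * U = 1) (ha : ∀ i, 0 < a i) :
    ∃ (C B : Matrix n n ℂ) (t : n → ℝ), B * C = 1 ∧ C * B = 1 ∧ U * Dg a * Uᴴ = C * Cᴴ ∧
      ρ = C * Dg t * Cᴴ ∧ ∑ i, t i = ∑ j, ((Uᴴ * ρ * U) j j).re / a j := by
  set e : n → ℝ := fun i => √(a i) with he
  set f : n → ℝ := fun i => (√(a i))⁻¹ with hf
  have hs : ∀ i, √(a i) ≠ 0 := fun i => (Real.sqrt_pos.2 (ha i)).ne'
  have hef : Dg e * Dg f = 1 := by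
    rw [Dg_mul, ← Dg_one]; congr 1; funext i; simp [he, hf, hs]
  have hfe : Dg f * Dg e = 1 := by
    rw [Dg_mul, ← Dg_one]; congr 1; funext i; simp [he, hf, hs]
  have hee : Dg e * Dg e = Dg a := by
    rw [Dg_mul]; congr 1; funext i; simp only [he]; rw [Real.mul_self_sqrt (ha i).le]
  set H := Dg f * (Uᴴ * ρ * U) * Dg f with hH
  have hHh : H.IsHermitian := by
    unfold Matrix.IsHermitian
    rw [hH]
    simp only [Matrix.conjTranspose_mul, Dg_star, Matrix.conjTranspose_conjTranspose, hρ.eq,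
      Matrix.mul_assoc]
  obtain ⟨V, t, v1, v2, hV⟩ := spec_ex H hHh
  refine ⟨U * Dg e * V, Vᴴ * Dg f * Uᴴ, t, ?_, ?_, ?_, ?_, ?_⟩
  · calc _ = Vᴴ * (Dg f * ((Uᴴ * U) * Dg e)) * V := by simp only [Matrix.mul_assoc]
      _ = 1 := by rw [h2, Matrix.one_mul, hfe, Matrix.mul_one, v2]
  · calc _ = U * (Dg e * ((V * Vᴴ) * Dg f)) * Uᴴ := by simp only [Matrix.mul_assoc]
      _ = 1 := by rw [v1, Matrix.one_mul, hef, Matrix.mul_one, h1]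
  · rw [Matrix.conjTranspose_mul, Matrix.conjTranspose_mul, Dg_star]
    calc _ = U * (Dg e * Dg e) * Uᴴ := by rw [hee]
      _ = U * (Dg e * ((V * Vᴴ) * Dg e)) * Uᴴ := by rw [v1, Matrix.one_mul]
      _ = _ := by simp only [Matrix.mul_assoc]
  · rw [Matrix.conjTranspose_mul, Matrix.conjTranspose_mul, Dg_star]
    symm
    calc _ = U * Dg e * (V * Dg t * Vᴴ) * Dg e * Uᴴ := by simp only [Matrix.mul_assoc]
      _ = U * (Dg e * Dg f) * (Uᴴ * ρ * U) * (Dg f * Dg e) * Uᴴ := by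
        rw [← hV, hH]; simp only [Matrix.mul_assoc]
      _ = (U * Uᴴ) * ρ * (U * Uᴴ) := by
        rw [hef, hfe]; simp only [Matrix.mul_assoc, Matrix.mul_one]
      _ = ρ := by rw [h1]; simp
  · have hT : H.trace = ((∑ i, t i : ℝ) : ℂ) := by
      rw [hV, Matrix.trace_mul_comm, ← Matrix.mul_assoc, v2, Matrix.one_mul]
      simp [Matrix.trace]
    have hT2 : H.trace.re = ∑ j, ((Uᴴ * ρ * U) j j).re / a j := by
      rw [Matrix.trace, Complex.re_sum]
      apply Finset.sum_congr rfl
      intro j _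
      rw [hH, Matrix.diag_apply, Matrix.mul_diagonal, Matrix.diagonal_mul, Complex.re_mul_ofReal,
        Complex.re_ofReal_mul]
      have := Real.mul_self_sqrt (ha j).le
      have h3 := hs j
      simp only [hf]
      rw [← this]
      field_simp
      rw [Real.sqrt_sq (Real.sqrt_nonneg _)]
    rw [← hT2, hT, Complex.ofReal_re]

lemma det_conj (W : Matrix n n ℂ) (m : n → ℝ) (h2 : Wᴴ * W = 1) :
    (W * Dg m * Wᴴ).det = ((∏ i, m i : ℝ) : ℂ) := by
  have : (Wᴴ * (W * Dg m)).det = (W * Dg m * Wᴴ).det := by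
    rw [Matrix.det_mul_comm]
  rw [← this, ← Matrix.mul_assoc, h2, Matrix.one_mul, Matrix.det_diagonal]
  simp

lemma diag_bound (C B M : Matrix n n ℂ) (k : n → ℝ) (hBC : B * C = 1) (h : M = C * Dg k * Cᴴ)
    (hM : M.PosSemidef) (i : n) : 0 ≤ k i := by
  have h1 := hM.mul_mul_conjTranspose_same B
  have e : Cᴴ * Bᴴ = 1 := by rw [← Matrix.conjTranspose_mul, hBC, Matrix.conjTranspose_one]
  have : B * M * Bᴴ = Dg k := by
    rw [h]
    calc _ = (B * C) * Dg k * (Cᴴ * Bᴴ) := by simp only [Matrix.mul_assoc]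
      _ = _ := by rw [hBC, e]; simp
  rw [this, Matrix.posSemidef_diagonal_iff] at h1
  exact_mod_cast h1 i

lemma pencil_facts (ρ σ W U : Matrix n n ℂ) (p q : n → ℝ)
    (w1 : W * Wᴴ = 1) (w2 : Wᴴ * W = 1) (u1 : U * Uᴴ = 1) (u2 : Uᴴ * U = 1)
    (hρ : ρ = W * Dg p * Wᴴ) (hσ : σ = U * Dg q * Uᴴ) (hρh : ρ.IsHermitian)
    (hq : ∀ i, 0 ≤ q i) (r : ℝ) (hr : 0 < r) (μ lam : ℝ)
    (hμ : ((ρ + r • 1) - μ • (σ + r • 1)).PosSemidef)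
    (hl : (lam • (σ + r • 1) - (ρ + r • 1)).PosSemidef) :
    ∃ t : n → ℝ, (∀ i, μ ≤ t i ∧ t i ≤ lam) ∧
      ∑ i, t i = ∑ j, (((Uᴴ * ρ * U) j j).re + r) / (q j + r) ∧
      ∏ i, (p i + r) = (∏ i, (q i + r)) * ∏ i, t i ∧
      ∀ (s : ℝ) (V : Matrix n n ℂ) (m : n → ℝ), V * Vᴴ = 1 → Vᴴ * V = 1 →
        s • σ - ρ = V * Dg m * Vᴴ →
        Fintype.card {i // 0 < m i + r * (s - 1)} = Fintype.card {i // t i < s} ∧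
        Fintype.card {i // m i + r * (s - 1) < 0} = Fintype.card {i // s < t i} := by
  have hr1 : (r • (1 : Matrix n n ℂ)).IsHermitian := by
    unfold Matrix.IsHermitian
    rw [Matrix.conjTranspose_smul]; simp
  obtain ⟨C, B, t, hBC, hCB, hs, hρ', hsum⟩ := pencil (ρ + r • 1) U (fun i => q i + r)
    (hρh.add hr1) u1 u2 (fun i => by have := hq i; positivity)
  have hs' : σ + r • 1 = C * Cᴴ := by rw [hσ, shift _ _ _ u1, hs]
  have key : ∀ s : ℝ, s • (σ + r • 1) - (ρ + r • 1) = C * Dg (fun i => s - t i) * Cᴴ := by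
    intro s
    rw [hs', hρ', ← Dg_sub, Matrix.mul_sub, Matrix.sub_mul, Matrix.mul_smul, Matrix.smul_mul,
      Matrix.mul_one]
  refine ⟨t, ?_, ?_, ?_, ?_⟩
  · intro i
    constructor
    · have e : (ρ + r • 1) - μ • (σ + r • 1) = C * Dg (fun i => t i - μ) * Cᴴ := by
        rw [← neg_sub, key, ← Matrix.neg_mul, ← Matrix.mul_neg]
        congr 2
        rw [Matrix.diagonal_neg]
        congr 1; funext i; push_cast; simp
      have := diag_bound C B _ _ hBC e hμ i
      linarith
    · have := diag_bound C B _ _ hBC (key lam) hl i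
      linarith
  · rw [hsum]
    apply Finset.sum_congr rfl
    intro j _
    rw [Matrix.mul_add, Matrix.add_mul, Matrix.mul_smul, Matrix.smul_mul, Matrix.mul_one, u2]
    simp
  · have d1 := det_conj W (fun i => p i + r) w2
    have d2 := det_conj U (fun i => q i + r) u2
    rw [← shift _ _ _ w1, ← hρ, hρ', Matrix.det_mul, Matrix.det_mul, Matrix.det_diagonal] at d1
    rw [hs, Matrix.det_mul] at d2
    have : ((∏ i, (p i + r) : ℝ) : ℂ) = (((∏ i, (q i + r)) * ∏ i, t i : ℝ) : ℂ) := by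
      rw [Complex.ofReal_mul, ← d1, ← d2]; push_cast; ring
    exact_mod_cast this
  · intro s V m v1 v2 hm
    have e1 : s • (σ + r • 1) - (ρ + r • 1) = V * Dg (fun i => m i + r * (s - 1)) * Vᴴ := by
      rw [← shift _ _ _ v1, ← hm]
      module
    rw [key] at e1
    have e2 : Dg (fun i => m i + r * (s - 1)) = (Vᴴ * C) * Dg (fun i => s - t i) * (Vᴴ * C)ᴴ := by
      rw [Matrix.conjTranspose_mul, Matrix.conjTranspose_conjTranspose]
      symm
      calc _ = Vᴴ * (C * Dg (fun i => s - t i) * Cᴴ) * V := by simp only [Matrix.mul_assoc]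
        _ = (Vᴴ * V) * Dg (fun i => m i + r * (s - 1)) * (Vᴴ * V) := by
          rw [e1]; simp only [Matrix.mul_assoc]
        _ = _ := by rw [v2]; simp
    have e3 : (B * V) * (Vᴴ * C) = 1 := by
      calc _ = B * (V * Vᴴ) * C := by simp only [Matrix.mul_assoc]
        _ = 1 := by rw [v1, Matrix.mul_one, hBC]
    have := inertia _ _ _ _ e3 e2
    simpa using this

section scalar
open MeasureTheory Filter Topology intervalIntegral

lemma int_if (μ lam t : ℝ) (hμ : 0 < μ) (h1 : μ ≤ t) (h2 : t ≤ lam) :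
    IntervalIntegrable (fun s : ℝ => if t < s then (s - 1) / s else 0) volume μ lam ∧
    ∫ s in μ..lam, (if t < s then (s - 1) / s else 0) =
      lam - t - (Real.log lam - Real.log t) := by
  have ht : 0 < t := hμ.trans_le h1
  have hl : 0 < lam := ht.trans_le h2
  have cont : ∀ a b : ℝ, 0 < a → 0 < b → ContinuousOn (fun s : ℝ => (s - 1) / s) (Set.uIcc a b) := by
    intro a b ha hb
    apply ContinuousOn.div (by fun_prop) (by fun_prop)
    intro x hx
    have : min a b ≤ x := hx.1
    exact (lt_of_lt_of_le (lt_min ha hb) this).ne'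
  have e1 : Set.EqOn (fun _ : ℝ => (0 : ℝ)) (fun s : ℝ => if t < s then (s - 1) / s else 0)
      (Set.uIoc μ t) := by
    intro s hs
    rw [Set.uIoc_of_le h1] at hs
    simp [not_lt.mpr hs.2]
  have e2 : Set.EqOn (fun s : ℝ => (s - 1) / s) (fun s : ℝ => if t < s then (s - 1) / s else 0)
      (Set.uIoc t lam) := by
    intro s hs
    rw [Set.uIoc_of_le h2] at hs
    simp [hs.1]
  have i1 : IntervalIntegrable (fun s : ℝ => if t < s then (s - 1) / s else 0) volume μ t :=
    (intervalIntegrable_congr e1).1 intervalIntegrable_const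
  have i2' := (cont t lam ht hl).intervalIntegrable (μ := volume)
  have i2 : IntervalIntegrable (fun s : ℝ => if t < s then (s - 1) / s else 0) volume t lam :=
    (intervalIntegrable_congr e2).1 i2'
  refine ⟨i1.trans i2, ?_⟩
  rw [← integral_add_adjacent_intervals i1 i2]
  rw [← integral_congr_ae (μ := volume) (a := μ) (b := t) (Eventually.of_forall e1),
    ← integral_congr_ae (μ := volume) (a := t) (b := lam) (Eventually.of_forall e2)]
  have e3 : ∫ s in t..lam, (s - 1) / s = ∫ s in t..lam, (1 - s⁻¹) := by
    apply integral_congr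
    intro s hs
    rw [Set.uIcc_of_le h2] at hs
    have : s ≠ 0 := (ht.trans_le hs.1).ne'
    simp only
    field_simp
  rw [e3, integral_sub intervalIntegrable_const, integral_inv_of_pos ht hl,
    Real.log_div hl.ne' ht.ne']
  · simp
  · apply ContinuousOn.intervalIntegrable
    apply ContinuousOn.inv₀ (by fun_prop)
    intro x hx
    rw [Set.uIcc_of_le h2] at hx
    exact (ht.trans_le hx.1).ne'

variable {n : Type*} [Fintype n]

/-- scalar version of the positive-part trace -/
noncomputable def gg (m : ℝ → n → ℝ) (r s : ℝ) : ℝ := ∑ i, max (m s i + r * (s - 1)) 0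

lemma gg_int (m : ℝ → n → ℝ) (r μ lam : ℝ) (hμ : 0 < μ) (hle : μ ≤ lam)
    (hmono : Monotone (gg m r)) :
    IntervalIntegrable (fun s => gg m r s / s) volume μ lam := by
  simp only [div_eq_mul_inv]
  apply (hmono.intervalIntegrable).mul_continuousOn
  apply ContinuousOn.inv₀ (by fun_prop)
  intro x hx
  rw [Set.uIcc_of_le hle] at hx
  exact (hμ.trans_le hx.1).ne'

lemma gg_nonneg (m : ℝ → n → ℝ) (r s : ℝ) : 0 ≤ gg m r s :=
  Finset.sum_nonneg fun _ _ => le_max_right _ _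

lemma gg_lip (m : ℝ → n → ℝ) (x y s : ℝ) :
    |gg m x s - gg m y s| ≤ Fintype.card n * (|s - 1| * |x - y|) := by
  unfold gg
  rw [← Finset.sum_sub_distrib]
  refine (Finset.abs_sum_le_sum_abs _ _).trans ?_
  rw [← nsmul_eq_mul, ← Finset.card_univ]
  apply Finset.sum_le_card_nsmul
  intro i _
  refine (abs_max_sub_max_le_abs _ _ _).trans ?_
  rw [← abs_mul]
  apply le_of_eq
  congr 1
  ring

lemma gg_deriv (m : ℝ → n → ℝ) (t : n → ℝ) (r s : ℝ) (hs : ∀ i, t i ≠ s)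
    (h1 : Fintype.card {i // 0 < m s i + r * (s - 1)} = Fintype.card {i // t i < s})
    (h2 : Fintype.card {i // m s i + r * (s - 1) < 0} = Fintype.card {i // s < t i}) :
    HasDerivAt (fun x => gg m x s / s) (∑ i, if t i < s then (s - 1) / s else 0) r := by
  classical
  simp only [Fintype.card_subtype] at h1 h2
  have hne : ∀ i, m s i + r * (s - 1) ≠ 0 := by
    have hA : (Finset.univ.filter fun i => t i < s).card +
        (Finset.univ.filter fun i => s < t i).card = Fintype.card n := by
      rw [← Finset.card_univ,
        ← Finset.card_filter_add_card_filter_not (s := Finset.univ) (fun i => t i < s)]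
      congr 2
      apply Finset.filter_congr
      intro i _
      have := hs i
      constructor
      · intro h; exact not_lt.mpr h.le
      · intro h; exact lt_of_le_of_ne (not_lt.mp h) (Ne.symm this)
    rw [← h1, ← h2, ← Finset.card_union_of_disjoint] at hA
    · intro i
      have := Finset.eq_univ_of_card _ hA
      have hi := Finset.mem_univ i
      rw [← this] at hi
      simp only [Finset.mem_union, Finset.mem_filter, Finset.mem_univ, true_and] at hi
      rcases hi with h | h
      · exact h.ne'
      · exact h.ne
    · rw [Finset.disjoint_filter]
      intro i _ h h'
      exact lt_asymm h h'
  have hterm : ∀ i ∈ Finset.univ, HasDerivAt (fun x => max (m s i + x * (s - 1)) 0)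
      (if 0 < m s i + r * (s - 1) then (s - 1) else 0) r := by
    intro i _
    have hlin : HasDerivAt (fun x => m s i + x * (s - 1)) (s - 1) r := by
      simpa using ((hasDerivAt_id r).mul_const (s - 1)).const_add (m s i)
    rcases lt_or_gt_of_ne (hne i) with h | h
    · rw [if_neg (not_lt.mpr h.le)]
      apply (hasDerivAt_const r (0 : ℝ)).congr_of_eventuallyEq
      filter_upwards [hlin.continuousAt.eventually_lt_const h] with x hx
      exact max_eq_right hx.le
    · rw [if_pos h]
      apply hlin.congr_of_eventuallyEq
      filter_upwards [hlin.continuousAt.eventually_const_lt h] with x hx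
      exact max_eq_left (le_of_lt hx)
  have hsum := (HasDerivAt.fun_sum hterm).div_const s
  have : (∑ i, if 0 < m s i + r * (s - 1) then (s - 1) else 0) / s =
      ∑ i, if t i < s then (s - 1) / s else 0 := by
    rw [← Finset.sum_filter, ← Finset.sum_filter, Finset.sum_const, Finset.sum_const, h1]
    simp only [nsmul_eq_mul]
    ring
  rw [this] at hsum
  exact hsum

lemma G_deriv (m : ℝ → n → ℝ) (t : n → ℝ) (r μ lam : ℝ) (hr : 0 < r) (hμ : 0 < μ) (hle : μ ≤ lam)
    (hmono : ∀ r, 0 ≤ r → Monotone (gg m r)) (ht : ∀ i, μ ≤ t i ∧ t i ≤ lam)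
    (h : ∀ s, Fintype.card {i // 0 < m s i + r * (s - 1)} = Fintype.card {i // t i < s} ∧
      Fintype.card {i // m s i + r * (s - 1) < 0} = Fintype.card {i // s < t i}) :
    HasDerivAt (fun x => ∫ s in μ..lam, gg m x s / s)
      (∑ i, (lam - t i - (Real.log lam - Real.log (t i)))) r := by
  have hInt := fun i => int_if μ lam (t i) hμ (ht i).1 (ht i).2
  have hval : ∫ s in μ..lam, (∑ i, if t i < s then (s - 1) / s else 0) =
      ∑ i, (lam - t i - (Real.log lam - Real.log (t i))) := by
    rw [integral_finsetSum (fun i _ => (hInt i).1)]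
    exact Finset.sum_congr rfl fun i _ => (hInt i).2
  rw [← hval]
  have hmeas : ∀ x, 0 ≤ x →
      AEStronglyMeasurable (fun s => gg m x s / s) (volume.restrict (Set.uIoc μ lam)) := by
    intro x hx
    rw [Set.uIoc_of_le hle]
    exact (gg_int m x μ lam hμ hle (hmono x hx)).1.aestronglyMeasurable
  refine (hasDerivAt_integral_of_dominated_loc_of_lip
    (bound := fun _ => Fintype.card n * (lam + 1) / μ) (s := Set.univ) univ_mem
    ?_ (gg_int m r μ lam hμ hle (hmono r hr.le)) ?_ ?_ intervalIntegrable_const ?_).2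
  · filter_upwards [eventually_gt_nhds hr] with x hx
    exact hmeas x hx.le
  · have : IntervalIntegrable (fun s => ∑ i, if t i < s then (s - 1) / s else 0) volume μ lam := by
      have := IntervalIntegrable.sum (μ := volume) (a := μ) (b := lam) Finset.univ
        (f := fun i s => if t i < s then (s - 1) / s else 0) (fun i _ => (hInt i).1)
      have e : (fun s => ∑ i, if t i < s then (s - 1) / s else 0) =
          ∑ i, fun s => if t i < s then (s - 1) / s else 0 := by
        funext s; simp
      rw [e]
      exact this
    rw [Set.uIoc_of_le hle]
    exact this.1.aestronglyMeasurable
  · refine Eventually.of_forall fun s hs => ?_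
    rw [Set.uIoc_of_le hle] at hs
    have hs0 : 0 < s := hμ.trans hs.1
    apply LipschitzOnWith.of_dist_le_mul
    intro x _ y _
    have hl : 0 < lam := hμ.trans_le hle
    have hK : (0 : ℝ) ≤ Fintype.card n * (lam + 1) / μ := by positivity
    rw [Real.dist_eq, Real.dist_eq, Real.coe_nnabs, abs_of_nonneg hK, ← sub_div,
      abs_div, abs_of_pos hs0]
    have hb : |s - 1| ≤ lam + 1 := by
      rw [abs_le]; constructor <;> linarith [hs.2]
    have := gg_lip m x y s
    calc _ ≤ (Fintype.card n * ((lam + 1) * |x - y|)) / μ := by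
          apply div_le_div₀ (by positivity) _ hμ hs.1.le
          refine this.trans ?_
          gcongr
      _ = _ := by ring
  · have hcount : ∀ᵐ s : ℝ ∂volume, s ∉ Set.range t :=
      (Set.finite_range t).countable.ae_notMem volume
    filter_upwards [hcount] with s hs _
    exact gg_deriv m t r s (fun i hi => hs ⟨i, hi⟩) (h s).1 (h s).2

lemma G_zero (m : ℝ → n → ℝ) (μ lam : ℝ) (hμ : 0 < μ) (hle : μ ≤ lam)
    (hmono : ∀ r, 0 ≤ r → Monotone (gg m r)) :
    Tendsto (fun x => ∫ s in μ..lam, gg m x s / s) (𝓝[>] 0)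
      (𝓝 (∫ s in μ..lam, gg m 0 s / s)) := by
  have hl : 0 < lam := hμ.trans_le hle
  have hInt := fun x hx => gg_int m x μ lam hμ hle (hmono x hx)
  apply intervalIntegral.tendsto_integral_filter_of_dominated_convergence
    (fun s => gg m 0 s / s + Fintype.card n * (lam + 1) / μ)
  · filter_upwards [self_mem_nhdsWithin] with x hx
    rw [Set.uIoc_of_le hle]
    exact (hInt x (le_of_lt hx)).1.aestronglyMeasurable
  · filter_upwards [self_mem_nhdsWithin, mem_nhdsWithin_of_mem_nhds (Iio_mem_nhds one_pos)]
      with x hx hx1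
    refine Eventually.of_forall fun s hs => ?_
    rw [Set.uIoc_of_le hle] at hs
    have hs0 : 0 < s := hμ.trans hs.1
    have hx0 : 0 < x := hx
    have hx1' : x < 1 := hx1
    have hb : |s - 1| ≤ lam + 1 := by
      rw [abs_le]; constructor <;> linarith [hs.2]
    rw [Real.norm_eq_abs, abs_of_nonneg (div_nonneg (gg_nonneg _ _ _) hs0.le)]
    have h1 := (abs_le.1 (gg_lip m x 0 s)).2
    have h2 : Fintype.card n * (|s - 1| * |x - 0|) ≤ Fintype.card n * ((lam + 1) * 1) := by
      gcongr
      rw [sub_zero, abs_of_pos hx0]; exact hx1'.le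
    have h3 : (Fintype.card n * (lam + 1)) / s ≤ (Fintype.card n * (lam + 1)) / μ := by
      apply div_le_div_of_nonneg_left (by positivity) hμ hs.1.le
    have h4 : gg m x s / s ≤ (gg m 0 s + Fintype.card n * (lam + 1)) / s := by
      gcongr; linarith
    rw [add_div] at h4
    linarith
  · exact (hInt 0 le_rfl).add intervalIntegrable_const
  · refine Eventually.of_forall fun s hs => ?_
    have : Continuous fun x => gg m x s / s := by
      unfold gg; fun_prop
    exact (this.tendsto 0).mono_left nhdsWithin_le_nhds

lemma G_inf (m : ℝ → n → ℝ) (μ lam : ℝ) (hμ : 0 < μ) (hμ1 : μ ≤ 1) (hl1 : 1 ≤ lam)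
    (hmono : ∀ r, 0 ≤ r → Monotone (gg m r)) (htr : ∀ s, ∑ i, m s i = s - 1) :
    Tendsto (fun x => (∫ s in μ..lam, gg m x s / s) -
      (1 + Fintype.card n * x) * (lam - 1 - Real.log lam)) atTop (𝓝 0) := by
  have hle := hμ1.trans hl1
  have hl : 0 < lam := hμ.trans_le hle
  have hInt := fun x hx => gg_int m x μ lam hμ hle (hmono x hx)
  obtain ⟨i1, v1⟩ := int_if μ lam 1 hμ hμ1 hl1
  rw [Real.log_one, sub_zero] at v1
  have hInt2 : ∀ x, 0 ≤ x → IntervalIntegrable (fun s => gg m x s / s -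
      (1 + Fintype.card n * x) * (if 1 < s then (s - 1) / s else 0)) volume μ lam :=
    fun x hx => (hInt x hx).sub (i1.const_mul _)
  have heq : ∀ x, 0 ≤ x → (∫ s in μ..lam, (gg m x s / s -
      (1 + Fintype.card n * x) * (if 1 < s then (s - 1) / s else 0))) =
      (∫ s in μ..lam, gg m x s / s) -
      (1 + Fintype.card n * x) * (lam - 1 - Real.log lam) := by
    intro x hx
    rw [integral_sub (hInt x hx) (i1.const_mul _), intervalIntegral.integral_const_mul, v1]
  have hsum : ∀ x s, ∑ i, (m s i + x * (s - 1)) = (1 + Fintype.card n * x) * (s - 1) := by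
    intro x s
    rw [Finset.sum_add_distrib, htr, Finset.sum_const, Finset.card_univ, nsmul_eq_mul]; ring
  have hz : (0 : ℝ) = ∫ s in μ..lam, (0 : ℝ) := by simp
  rw [hz]
  refine Tendsto.congr' (f₁ := fun x => ∫ s in μ..lam, (gg m x s / s -
      (1 + Fintype.card n * x) * (if 1 < s then (s - 1) / s else 0))) ?_ ?_
  · filter_upwards [eventually_ge_atTop 0] with x hx using heq x hx
  apply intervalIntegral.tendsto_integral_filter_of_dominated_convergence (fun s => gg m 0 s / s)
  · filter_upwards [eventually_ge_atTop 0] with x hx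
    rw [Set.uIoc_of_le hle]
    exact (hInt2 x hx).1.aestronglyMeasurable
  · filter_upwards [eventually_ge_atTop 0] with x hx
    refine Eventually.of_forall fun s hs => ?_
    rw [Set.uIoc_of_le hle] at hs
    have hs0 : 0 < s := hμ.trans hs.1
    by_cases h1 : 1 < s
    · rw [if_pos h1, ← mul_div_assoc, ← sub_div, ← hsum, Real.norm_eq_abs, abs_div, abs_of_pos hs0]
      gcongr
      unfold gg
      rw [← Finset.sum_sub_distrib]
      have hx1 : 0 ≤ x * (s - 1) := mul_nonneg hx (by linarith)
      have hk : ∀ i, 0 ≤ max (m s i + x * (s - 1)) 0 - (m s i + x * (s - 1)) := fun i => by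
        linarith [le_max_left (m s i + x * (s - 1)) 0]
      rw [abs_of_nonneg (Finset.sum_nonneg fun i _ => hk i)]
      have : ∑ i, (max (m s i + x * (s - 1)) 0 - (m s i + x * (s - 1))) ≤
          ∑ i, (max (m s i + 0 * (s - 1)) 0 - m s i) := by
        apply Finset.sum_le_sum
        intro i _
        rw [zero_mul, add_zero]
        rcases max_cases (m s i + x * (s - 1)) 0 with h | h <;>
        rcases max_cases (m s i) 0 with h' | h' <;> linarith
      have h5 : ∑ i, (max (m s i + 0 * (s - 1)) 0 - m s i) =
          ∑ i, max (m s i + 0 * (s - 1)) 0 - (s - 1) := by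
        rw [Finset.sum_sub_distrib, htr]
      linarith
    · rw [if_neg h1, mul_zero, sub_zero, Real.norm_eq_abs,
        abs_of_nonneg (div_nonneg (gg_nonneg _ _ _) hs0.le)]
      gcongr
      unfold gg
      apply Finset.sum_le_sum
      intro i _
      apply max_le_max _ le_rfl
      have : x * (s - 1) ≤ 0 := mul_nonpos_of_nonneg_of_nonpos hx (by linarith)
      linarith
  · exact hInt 0 le_rfl
  · have hcount : ∀ᵐ s : ℝ ∂volume, s ∉ ({1} : Set ℝ) :=
      (Set.countable_singleton 1).ae_notMem volume
    filter_upwards [hcount] with s hs1 hs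
    apply tendsto_const_nhds.congr'
    have hs1' : s ≠ 1 := hs1
    rcases lt_or_gt_of_ne hs1' with h | h
    · have : ∀ i, ∀ᶠ x in atTop, m s i + x * (s - 1) < 0 := fun i => by
        have : Tendsto (fun x : ℝ => m s i + x * (s - 1)) atTop atBot :=
          tendsto_atBot_add_const_left _ _ (tendsto_id.atTop_mul_const_of_neg (by linarith))
        exact this.eventually_lt_atBot 0
      filter_upwards [eventually_all.2 this] with x hx
      rw [if_neg (by linarith), mul_zero, sub_zero]
      unfold gg
      rw [Finset.sum_eq_zero fun i _ => max_eq_right (hx i).le, zero_div]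
    · have : ∀ i, ∀ᶠ x in atTop, 0 < m s i + x * (s - 1) := fun i => by
        have : Tendsto (fun x : ℝ => m s i + x * (s - 1)) atTop atTop :=
          tendsto_atTop_add_const_left _ _ (tendsto_id.atTop_mul_const (by linarith))
        exact this.eventually_gt_atTop 0
      filter_upwards [eventually_all.2 this] with x hx
      rw [if_pos h, ← mul_div_assoc, ← sub_div, ← hsum]
      unfold gg
      rw [Finset.sum_congr rfl fun i _ => max_eq_left (hx i).le]
      simp


lemma F_deriv (p q d : n → ℝ) (hp : ∀ i, 0 ≤ p i) (hq : ∀ i, 0 ≤ q i) (r : ℝ) (hr : 0 < r) :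
    HasDerivAt (fun x => ∑ i, (p i + x) * Real.log (p i + x) -
      ∑ i, (d i + x) * Real.log (q i + x))
      (∑ i, (Real.log (p i + r) + 1) - ∑ i, (Real.log (q i + r) + (d i + r) / (q i + r))) r := by
  have sh : ∀ a : ℝ, HasDerivAt (fun x => a + x) 1 r := fun a => by
    simpa using (hasDerivAt_id r).const_add a
  have lg : ∀ a : ℝ, 0 ≤ a → HasDerivAt (fun x => Real.log (a + x)) (1 / (a + r)) r :=
    fun a ha => (sh a).log (by positivity)
  apply HasDerivAt.sub
  · apply HasDerivAt.fun_sum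
    intro i _
    refine ((sh (p i)).mul (lg _ (hp i))).congr_deriv ?_
    have : p i + r ≠ 0 := by have := hp i; positivity
    field_simp
  · apply HasDerivAt.fun_sum
    intro i _
    refine ((sh (d i)).mul (lg _ (hq i))).congr_deriv ?_
    have : q i + r ≠ 0 := by have := hq i; positivity
    field_simp

lemma lim_term (c a : ℝ) :
    Tendsto (fun x : ℝ => (c + x) * Real.log (1 + a / x)) atTop (𝓝 a) := by
  have h1 := Real.tendsto_mul_log_one_add_div_atTop a
  have h2 : Tendsto (fun x : ℝ => c * Real.log (1 + a / x)) atTop (𝓝 0) := by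
    have h3 : Tendsto (fun x : ℝ => 1 + a / x) atTop (𝓝 1) := by
      simpa using (tendsto_const_nhds (x := a)).div_atTop tendsto_id |>.const_add 1
    have := ((Real.continuousAt_log one_ne_zero).tendsto.comp h3).const_mul c
    simpa using this
  have := h2.add h1
  rw [zero_add] at this
  refine this.congr fun x => ?_
  ring

lemma F_inf (p q d : n → ℝ) (hp : ∀ i, 0 ≤ p i) (hq : ∀ i, 0 ≤ q i)
    (hp1 : ∑ i, p i = 1) (hq1 : ∑ i, q i = 1) (hd1 : ∑ i, d i = 1) :
    Tendsto (fun x => ∑ i, (p i + x) * Real.log (p i + x) -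
      ∑ i, (d i + x) * Real.log (q i + x)) atTop (𝓝 0) := by
  have h1 : Tendsto (fun x => ∑ i, (p i + x) * Real.log (1 + p i / x) -
      ∑ i, (d i + x) * Real.log (1 + q i / x)) atTop (𝓝 (∑ i, p i - ∑ i, q i)) :=
    (tendsto_finsetSum _ fun i _ => lim_term _ _).sub
      (tendsto_finsetSum _ fun i _ => lim_term _ _)
  rw [hp1, hq1, sub_self] at h1
  refine h1.congr' ?_
  filter_upwards [eventually_gt_atTop 0] with x hx
  have e : ∀ a : ℝ, 0 ≤ a → Real.log (a + x) = Real.log x + Real.log (1 + a / x) := fun a ha => by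
    rw [← Real.log_mul hx.ne' (by positivity)]
    congr 1
    field_simp
    ring
  have e1 : ∑ i, (p i + x) * Real.log (p i + x) =
      (1 + Fintype.card n * x) * Real.log x + ∑ i, (p i + x) * Real.log (1 + p i / x) := by
    simp only [e _ (hp _), mul_add, Finset.sum_add_distrib, ← Finset.sum_mul]
    simp [hp1]
  have e2 : ∑ i, (d i + x) * Real.log (q i + x) =
      (1 + Fintype.card n * x) * Real.log x + ∑ i, (d i + x) * Real.log (1 + q i / x) := by
    simp only [e _ (hq _), mul_add, Finset.sum_add_distrib, ← Finset.sum_mul]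
    simp [hd1]
  rw [e1, e2]
  ring

lemma F_zero (p q d : n → ℝ) (hdq : ∀ i, q i = 0 → d i = 0) :
    Tendsto (fun x => ∑ i, (p i + x) * Real.log (p i + x) -
      ∑ i, (d i + x) * Real.log (q i + x)) (𝓝 0)
      (𝓝 (∑ i, p i * Real.log (p i) - ∑ i, d i * Real.log (q i))) := by
  have ml : ∀ a : ℝ, Tendsto (fun x : ℝ => (a + x) * Real.log (a + x)) (𝓝 0)
      (𝓝 (a * Real.log a)) := fun a => by
    have : Continuous (fun x : ℝ => (a + x) * Real.log (a + x)) :=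
      Real.continuous_mul_log.comp (continuous_const.add continuous_id)
    simpa using this.tendsto 0
  apply Tendsto.sub
  · exact tendsto_finsetSum _ fun i _ => ml _
  · refine tendsto_finsetSum _ fun i _ => ?_
    by_cases h : q i = 0
    · rw [h, hdq i h]
      exact ml 0
    · have : ContinuousAt (fun x : ℝ => (d i + x) * Real.log (q i + x)) 0 := by
        apply ContinuousAt.mul (by fun_prop)
        apply ContinuousAt.log (by fun_prop)
        simpa using h
      simpa using this.tendsto

theorem scalar_main (m : ℝ → n → ℝ) (p q d : n → ℝ) (μ lam : ℝ) (hμ : 0 < μ) (hμ1 : μ ≤ 1)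
    (hl1 : 1 ≤ lam) (hp : ∀ i, 0 ≤ p i) (hq : ∀ i, 0 ≤ q i)
    (hp1 : ∑ i, p i = 1) (hq1 : ∑ i, q i = 1) (hd1 : ∑ i, d i = 1)
    (hdq : ∀ i, q i = 0 → d i = 0)
    (hmono : ∀ r, 0 ≤ r → Monotone (gg m r)) (htr : ∀ s, ∑ i, m s i = s - 1)
    (hpen : ∀ r, 0 < r → ∃ t : n → ℝ, (∀ i, μ ≤ t i ∧ t i ≤ lam) ∧
      ∑ i, t i = ∑ j, (d j + r) / (q j + r) ∧
      ∏ i, (p i + r) = (∏ i, (q i + r)) * ∏ i, t i ∧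
      ∀ s, Fintype.card {i // 0 < m s i + r * (s - 1)} = Fintype.card {i // t i < s} ∧
        Fintype.card {i // m s i + r * (s - 1) < 0} = Fintype.card {i // s < t i}) :
    ∑ i, p i * Real.log (p i) - ∑ i, d i * Real.log (q i) =
      (∫ s in μ..lam, gg m 0 s / s) + Real.log lam + 1 - lam := by
  set Φ : ℝ → ℝ := fun x => (∑ i, (p i + x) * Real.log (p i + x) -
      ∑ i, (d i + x) * Real.log (q i + x)) - ((∫ s in μ..lam, gg m x s / s) -
      (1 + Fintype.card n * x) * (lam - 1 - Real.log lam)) with hΦ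
  have hle := hμ1.trans hl1
  have hder : ∀ r ∈ Set.Ioi (0 : ℝ), HasDerivAt Φ 0 r := by
    intro r hr
    have hr : 0 < r := hr
    obtain ⟨t, ht, hts, htp, hcard⟩ := hpen r hr
    have h1 := F_deriv p q d hp hq r hr
    have h2 := G_deriv m t r μ lam hr hμ hle hmono ht hcard
    have h3 : HasDerivAt (fun x => (1 + Fintype.card n * x) * (lam - 1 - Real.log lam))
        (Fintype.card n * (lam - 1 - Real.log lam)) r := by
      simpa using (((hasDerivAt_id r).const_mul (Fintype.card n : ℝ)).const_add 1).mul_const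
        (lam - 1 - Real.log lam)
    have h4 := h1.sub (h2.sub h3)
    refine h4.congr_deriv ?_
    have hlog := congrArg Real.log htp
    have t0 : ∀ i, t i ≠ 0 := fun i => (hμ.trans_le (ht i).1).ne'
    have p0 : ∀ i, p i + r ≠ 0 := fun i => by have := hp i; positivity
    have q0 : ∀ i, q i + r ≠ 0 := fun i => by have := hq i; positivity
    rw [Real.log_mul (Finset.prod_ne_zero_iff.2 fun i _ => q0 i)
      (Finset.prod_ne_zero_iff.2 fun i _ => t0 i), Real.log_prod (fun i _ => p0 i),
      Real.log_prod (fun i _ => q0 i), Real.log_prod (fun i _ => t0 i)] at hlog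
    simp only [Finset.sum_add_distrib, Finset.sum_sub_distrib, Finset.sum_const, Finset.card_univ,
      nsmul_eq_mul]
    rw [← hts, hlog]
    ring
  have hconst : ∀ x ∈ Set.Ioi (0 : ℝ), Φ x = Φ 1 := by
    intro x hx
    refine isOpen_Ioi.is_const_of_deriv_eq_zero (convex_Ioi 0).isPreconnected ?_ ?_ hx
      (Set.mem_Ioi.2 one_pos)
    · exact fun y hy => (hder y hy).differentiableAt.differentiableWithinAt
    · exact fun y hy => (hder y hy).deriv
  have hinf : Tendsto Φ atTop (𝓝 0) := by
    have := (F_inf p q d hp hq hp1 hq1 hd1).sub (G_inf m μ lam hμ hμ1 hl1 hmono htr)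
    simpa using this
  have hΦ1 : Φ 1 = 0 := by
    refine tendsto_nhds_unique ?_ hinf
    apply tendsto_const_nhds.congr'
    filter_upwards [eventually_gt_atTop 0] with x hx using (hconst x hx).symm
  have hzero : Tendsto Φ (𝓝[>] 0) (𝓝 ((∑ i, p i * Real.log (p i) - ∑ i, d i * Real.log (q i)) -
      ((∫ s in μ..lam, gg m 0 s / s) -
      (1 + Fintype.card n * 0) * (lam - 1 - Real.log lam)))) := by
    apply ((F_zero p q d hdq).mono_left nhdsWithin_le_nhds).sub
    apply (G_zero m μ lam hμ hle hmono).sub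
    have : Continuous fun x : ℝ => (1 + Fintype.card n * x) * (lam - 1 - Real.log lam) := by
      fun_prop
    exact (this.tendsto 0).mono_left nhdsWithin_le_nhds
  have := tendsto_nhds_unique hzero (tendsto_const_nhds.congr' (f₁ := fun _ => (0 : ℝ)) (by
    filter_upwards [self_mem_nhdsWithin] with x hx
    rw [hconst x hx, hΦ1]))
  linarith

end scalar

end RelEntAux

/-- for states ρ, σ with μσ ≤ ρ ≤ λσ (0 < μ ≤ λ), the relative entropy
`D(ρ‖σ) = tr[ρ(ln ρ − ln σ)]` equals `∫_μ^λ (1/s) tr⁺[σs − ρ] ds + ln λ + 1 − λ`. -/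
theorem relEnt_eq_integral_repr {n : Type*} [Fintype n] [DecidableEq n]
    (ρ σ : Matrix n n ℂ) (hρ : ρ.PosSemidef) (hσ : σ.PosSemidef)
    (hρ1 : Matrix.trace ρ = 1) (hσ1 : Matrix.trace σ = 1)
    (μ lam : ℝ) (hμ : 0 < μ) (hle : μ ≤ lam)
    (hlower : (ρ - μ • σ).PosSemidef) (hupper : (lam • σ - ρ).PosSemidef) :
    (Matrix.trace (ρ * (matLog ρ - matLog σ))).re =
      (∫ s in μ..lam, trPos (s • σ - ρ) / s) + Real.log lam + 1 - lam := by
  classical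
  have hσh := hσ.1
  have hρh := hρ.1
  -- real scalar multiples are Hermitian
  have hsm : ∀ (s : ℝ) (A : Matrix n n ℂ), A.IsHermitian → (s • A).IsHermitian := by
    intro s A hA
    unfold Matrix.IsHermitian
    rw [Matrix.conjTranspose_smul, hA.eq]; simp
  have hpsm : ∀ (s : ℝ) (A : Matrix n n ℂ), 0 ≤ s → A.PosSemidef → (s • A).PosSemidef :=
    fun s A hs hA => hA.smul hs
  have hM : ∀ s : ℝ, (s • σ - ρ).IsHermitian := fun s => (hsm s σ hσh).sub hρh
  choose V m v1 v2 hVm using fun s : ℝ => RelEntAux.spec_ex (s • σ - ρ) (hM s)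
  set W : Matrix n n ℂ := (hρh.eigenvectorUnitary : Matrix n n ℂ) with hW
  set U : Matrix n n ℂ := (hσh.eigenvectorUnitary : Matrix n n ℂ) with hU
  have w1 : W * Wᴴ = 1 := Unitary.coe_mul_star_self hρh.eigenvectorUnitary
  have w2 : Wᴴ * W = 1 := Unitary.coe_star_mul_self hρh.eigenvectorUnitary
  have u1 : U * Uᴴ = 1 := Unitary.coe_mul_star_self hσh.eigenvectorUnitary
  have u2 : Uᴴ * U = 1 := Unitary.coe_star_mul_self hσh.eigenvectorUnitary
  set p := hρh.eigenvalues with hp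
  set q := hσh.eigenvalues with hq
  have hρs : ρ = W * RelEntAux.Dg p * Wᴴ := RelEntAux.spec ρ hρh
  have hσs : σ = U * RelEntAux.Dg q * Uᴴ := RelEntAux.spec σ hσh
  have hp0 : ∀ i, 0 ≤ p i := hρ.eigenvalues_nonneg
  have hq0 : ∀ i, 0 ≤ q i := hσ.eigenvalues_nonneg
  have tr_eq : ∀ (X : Matrix n n ℂ) (a : n → ℝ), Xᴴ * X = 1 →
      (Matrix.trace (X * RelEntAux.Dg a * Xᴴ)).re = ∑ i, a i := by
    intro X a hX
    rw [Matrix.trace_mul_comm, ← Matrix.mul_assoc, hX, Matrix.one_mul]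
    simp [Matrix.trace]
  have hp1 : ∑ i, p i = 1 := by rw [← tr_eq W p w2, ← hρs, hρ1]; simp
  have hq1 : ∑ i, q i = 1 := by rw [← tr_eq U q u2, ← hσs, hσ1]; simp
  have hμ1 : μ ≤ 1 := by
    have := (Complex.le_def.1 hlower.trace_nonneg).1
    rw [Matrix.trace_sub, Matrix.trace_smul, hρ1, hσ1] at this
    simpa using this
  have hl1 : 1 ≤ lam := by
    have := (Complex.le_def.1 hupper.trace_nonneg).1
    rw [Matrix.trace_sub, Matrix.trace_smul, hρ1, hσ1] at this
    simpa using this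
  set d : n → ℝ := fun j => ((Uᴴ * ρ * U) j j).re with hd
  have hd1 : ∑ i, d i = 1 := by
    have : (Matrix.trace (Uᴴ * ρ * U)).re = 1 := by
      rw [Matrix.trace_mul_comm, ← Matrix.mul_assoc, u1, Matrix.one_mul, hρ1]; simp
    rw [← this, Matrix.trace, Complex.re_sum]
    rfl
  have hdq : ∀ i, q i = 0 → d i = 0 := by
    intro i hi
    have h1 : 0 ≤ d i := (Complex.le_def.1 (hρ.conjTranspose_mul_mul_same U).diag_nonneg).1
    have h2 := (Complex.le_def.1 ((hupper.conjTranspose_mul_mul_same U).diag_nonneg (i := i))).1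
    have e : Uᴴ * σ * U = RelEntAux.Dg q := by
      rw [hσs]
      calc _ = (Uᴴ * U) * RelEntAux.Dg q * (Uᴴ * U) := by simp only [Matrix.mul_assoc]
        _ = _ := by rw [u2]; simp
    rw [Matrix.mul_sub, Matrix.sub_mul, Matrix.mul_smul, Matrix.smul_mul, e] at h2
    have h3 : 0 ≤ - d i := by simpa [hi] using h2
    linarith
  have htrP : ∀ r s : ℝ, trPos (s • (σ + r • 1) - (ρ + r • 1)) = RelEntAux.gg m r s := by
    intro r s
    have e : s • (σ + r • (1 : Matrix n n ℂ)) - (ρ + r • 1) =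
        V s * RelEntAux.Dg (fun i => m s i + r * (s - 1)) * (V s)ᴴ := by
      rw [← RelEntAux.shift _ _ _ (v1 s), ← hVm s]
      module
    rw [e, RelEntAux.trPos_eq _ _ (v1 s) (v2 s)]
    rfl
  have hone : (1 : Matrix n n ℂ).PosSemidef := Matrix.PosSemidef.one
  have hmono : ∀ r, 0 ≤ r → Monotone (RelEntAux.gg m r) := by
    intro r hr s s' hss
    rw [← htrP, ← htrP]
    have hσr : (σ + r • (1 : Matrix n n ℂ)).PosSemidef := hσ.add (hpsm r 1 hr hone)
    apply RelEntAux.trPos_mono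
    · exact (hsm _ _ hσr.1).sub (hρh.add (hsm r 1 hone.1))
    · have e : s' • (σ + r • (1 : Matrix n n ℂ)) - (ρ + r • 1) -
          (s • (σ + r • (1 : Matrix n n ℂ)) - (ρ + r • 1)) =
          (s' - s) • (σ + r • (1 : Matrix n n ℂ)) := by module
      rw [e]
      exact hpsm _ _ (by linarith) hσr
  have htr : ∀ s, ∑ i, m s i = s - 1 := by
    intro s
    rw [← tr_eq (V s) (m s) (v2 s), ← hVm s, Matrix.trace_sub, Matrix.trace_smul, hρ1, hσ1]
    simp
  have main := RelEntAux.scalar_main m p q d μ lam hμ hμ1 hl1 hp0 hq0 hp1 hq1 hd1 hdq hmono htr (by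
    intro r hr
    obtain ⟨t, ht, hts, htp, hc⟩ := RelEntAux.pencil_facts ρ σ W U p q w1 w2 u1 u2 hρs hσs hρh hq0
      r hr μ lam
      (by
        have e : (ρ + r • (1 : Matrix n n ℂ)) - μ • (σ + r • 1) =
            (ρ - μ • σ) + (r * (1 - μ)) • (1 : Matrix n n ℂ) := by module
        rw [e]
        exact hlower.add (hpsm _ _ (mul_nonneg hr.le (by linarith)) hone))
      (by
        have e : lam • (σ + r • (1 : Matrix n n ℂ)) - (ρ + r • 1) =
            (lam • σ - ρ) + (r * (lam - 1)) • (1 : Matrix n n ℂ) := by module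
        rw [e]
        exact hupper.add (hpsm _ _ (mul_nonneg hr.le (by linarith)) hone))
    exact ⟨t, ht, hts, htp, fun s => hc s (V s) (m s) (v1 s) (v2 s) (hVm s)⟩)
  have hlogρ : matLog ρ = W * RelEntAux.Dg (fun i => Real.log (p i)) * Wᴴ := by
    unfold matLog
    rw [dif_pos hρh]
    rfl
  have hlogσ : matLog σ = U * RelEntAux.Dg (fun i => Real.log (q i)) * Uᴴ := by
    unfold matLog
    rw [dif_pos hσh]
    rfl
  have e1 : (Matrix.trace (ρ * matLog ρ)).re = ∑ i, p i * Real.log (p i) := by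
    rw [hlogρ, RelEntAux.trace_conj]
    have e : Wᴴ * ρ * W = RelEntAux.Dg p := by
      rw [hρs]
      calc _ = (Wᴴ * W) * RelEntAux.Dg p * (Wᴴ * W) := by simp only [Matrix.mul_assoc]
        _ = _ := by rw [w2]; simp
    rw [e]
    simp
  have e2 : (Matrix.trace (ρ * matLog σ)).re = ∑ i, d i * Real.log (q i) := by
    rw [hlogσ, RelEntAux.trace_conj]
  rw [Matrix.mul_sub, Matrix.trace_sub, Complex.sub_re, e1, e2, main]
  congr 3
  apply intervalIntegral.integral_congr
  intro s _
  have := htrP 0 s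
  simp only [zero_smul, add_zero] at this
  simp only [this]
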